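/- arXiv:math-ph/0406006 — 4 statements merged into one kernel-verified Lean document; each statement's English description precedes it below -/
import Mathlib

section
/- The operator c₀ has trace zero, and consequently if Δ ≠ 0 the hermitian form (s, s') := ⟨c₀ s, s'⟩ is indefinite: there exist nonzero s, s' ∈ Δ with (s, s) < 0 < (s', s'). In particular (·,·) is not positive definite. -/
/-!
Fix one spatial generator `e` (`c i` with `i ≠ 0`, which exists as `1 ≤ n`).
Anticommutation and `e² = -1` give `c 0 = e (c 0) e`, so cyclicity of the trace
yields `tr (c 0) = -tr (c 0)`. Since `e` is moreover
skew-adjoint, it reverses the sign of the form: `⟪c 0 (e s), e s⟫ = -⟪c 0 s, s⟫`. For indefiniteness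
it therefore suffices to find one vector with `⟪c 0 s, s⟫ ≠ 0`, and any eigenvector of the
involution `c 0` is such a vector.
-/

open scoped InnerProductSpace

/-- Lemma 2.1: `c 0` is traceless and hence (for `Δ ≠ 0`) the hermitian form
`(s, s') := ⟪c 0 s, s'⟫` is indefinite; in particular it is not positive definite. -/
theorem indefinite_form_not_positive_definite
    (n : ℕ) (hn : 1 ≤ n) (Δ : Type*) [NormedAddCommGroup Δ]
    [InnerProductSpace ℂ Δ] [FiniteDimensional ℂ Δ]
    (c : Fin (n + 1) → (Δ →ₗ[ℂ] Δ))
    (hc0 : c 0 ∘ₗ c 0 = LinearMap.id)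
    (hci : ∀ i : Fin (n + 1), i ≠ 0 → c i ∘ₗ c i = -LinearMap.id)
    (hanti : ∀ a b : Fin (n + 1), a ≠ b → c a ∘ₗ c b + c b ∘ₗ c a = 0)
    (hsa : ∀ s s' : Δ, ⟪c 0 s, s'⟫_ℂ = ⟪s, c 0 s'⟫_ℂ)
    (hska : ∀ i : Fin (n + 1), i ≠ 0 → ∀ s s' : Δ, ⟪c i s, s'⟫_ℂ = -⟪s, c i s'⟫_ℂ) :
    LinearMap.trace ℂ Δ (c 0) = 0 ∧
    (Nontrivial Δ →
      (∃ s s' : Δ, s ≠ 0 ∧ s' ≠ 0 ∧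
        (⟪c 0 s, s⟫_ℂ).re < 0 ∧ 0 < (⟪c 0 s', s'⟫_ℂ).re) ∧
      ¬ (∀ s : Δ, s ≠ 0 → 0 < (⟪c 0 s, s⟫_ℂ).re)) := by
  obtain ⟨i, hi⟩ : ∃ i : Fin (n + 1), i ≠ 0 :=
    ⟨Fin.last n, fun h => by simp [Fin.ext_iff] at h; omega⟩
  have h0 : ∀ s, c 0 (c 0 s) = s := fun s => LinearMap.congr_fun hc0 s
  have hsq : ∀ s, c i (c i s) = -s := fun s => LinearMap.congr_fun (hci i hi) s
  have hac : ∀ s, c 0 (c i s) = -c i (c 0 s) := fun s =>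
    eq_neg_of_add_eq_zero_left (LinearMap.congr_fun (hanti 0 i hi.symm) s)
  have hflip : ∀ s, (⟪c 0 (c i s), c i s⟫_ℂ).re = -(⟪c 0 s, s⟫_ℂ).re := by
    intro s
    rw [hac, inner_neg_left, hska i hi, hsq, inner_neg_right, neg_neg, Complex.neg_re]
  refine ⟨?_, fun _ => ?_⟩
  · have h1 : c i * (c 0 * c i) = c 0 := by
      ext s
      simp [hac, hsq]
    have h2 : (c 0 * c i) * c i = -c 0 := by
      ext s
      simp [hsq]
    have h3 := LinearMap.trace_mul_comm ℂ (c i) (c 0 * c i)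
    rw [h1, h2, map_neg] at h3
    exact self_eq_neg.mp h3
  · have hnz : ∀ s, (⟪c 0 s, s⟫_ℂ).re ≠ 0 → s ≠ 0 := by
      rintro s hs rfl
      simp at hs
    have hself : ∀ s : Δ, s ≠ 0 → 0 < (⟪s, s⟫_ℂ).re := fun s hs => by
      have h : (⟪s, s⟫_ℂ).re = ‖s‖ ^ 2 := inner_self_eq_norm_sq (𝕜 := ℂ) s
      rw [h]
      exact pow_pos (norm_pos_iff.mpr hs) 2
    obtain ⟨v, hv⟩ : ∃ v, (⟪c 0 v, v⟫_ℂ).re ≠ 0 := by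
      obtain ⟨s, hs⟩ := exists_ne (0 : Δ)
      -- `s + c 0 s` is the (unnormalised) projection of `s` to the `+1`-eigenspace; if it
      -- vanishes, `s` itself lies in the `-1`-eigenspace.
      by_cases h : s + c 0 s = 0
      · refine ⟨s, ?_⟩
        rw [eq_neg_of_add_eq_zero_right h, inner_neg_left, Complex.neg_re]
        exact neg_ne_zero.mpr (hself s hs).ne'
      · refine ⟨s + c 0 s, ?_⟩
        rw [map_add, h0, add_comm (c 0 s) s]
        exact (hself _ h).ne'
    have key : ∃ s s' : Δ, s ≠ 0 ∧ s' ≠ 0 ∧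
        (⟪c 0 s, s⟫_ℂ).re < 0 ∧ 0 < (⟪c 0 s', s'⟫_ℂ).re := by
      have hv' : (⟪c 0 (c i v), c i v⟫_ℂ).re ≠ 0 := by
        rw [hflip]
        exact neg_ne_zero.mpr hv
      rcases lt_or_gt_of_ne hv with h | h
      · exact ⟨v, c i v, hnz _ hv, hnz _ hv', h, by rw [hflip]; linarith⟩
      · exact ⟨c i v, v, hnz _ hv', hnz _ hv, by rw [hflip]; linarith, h⟩
    refine ⟨key, fun hpos => ?_⟩
    obtain ⟨s, _, hs, _, hneg, _⟩ := key
    exact (hpos s hs).not_gt hneg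
end

section
/- Suppose Δ ≠ 0, E ∈ ℝ and P = (P₁, …, Pₙ) ∈ ℝⁿ. If for every φ ∈ Δ the real part of ⟨φ, E φ + Σ_{k=1}^{n} P_k (c₀ ∘ c_k) φ⟩ is nonnegative, then E − ‖P‖ ≥ 0, where ‖P‖ = (Σ_k P_k²)^{1/2}. -/
/-!
Write `B = ∑ P_k c_k`, `A = c₀ B` and `r = |P|`. The Clifford relations give `B² = -r²`, so that
`A² = r²`, and `c₀` anticommutes with `A`. Hence `-r` is an eigenvalue of `A`: for `ψ ≠ 0`, either
`A ψ - r ψ` is a nonzero eigenvector, or `A ψ = r ψ` and then `c₀ ψ` is one. The form evaluated at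
such an eigenvector `φ` is `(E - r) ‖φ‖²`, which forces `E ≥ r`.
-/


open scoped InnerProductSpace

/-- Clifford relation for a real linear combination of anticommuting generators. -/
lemma sum_clifford_mul_self {V ι : Type*} [AddCommGroup V] [Module ℂ V] [Fintype ι]
    (e : ι → Module.End ℂ V) (hsq : ∀ i, e i * e i = -1)
    (hanti : ∀ i j, i ≠ j → e i * e j + e j * e i = 0) (P : ι → ℝ) :
    (∑ k, (P k : ℂ) • e k) * (∑ k, (P k : ℂ) • e k) = -((∑ k, P k ^ 2 : ℝ) : ℂ) • 1 := by
  classical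
  set B := ∑ k, (P k : ℂ) • e k with hB
  have h1 : B * B = ∑ i, ∑ j, ((P i : ℂ) * P j) • (e i * e j) := by
    simp only [hB, Finset.sum_mul_sum, smul_mul_smul_comm]
  have h2 : B * B = ∑ i, ∑ j, ((P i : ℂ) * P j) • (e j * e i) := by
    rw [h1, Finset.sum_comm]
    simp only [mul_comm]
  -- symmetrizing the double sum kills the off-diagonal terms
  have h3 : (2 : ℂ) • (B * B) = (2 : ℂ) • (-((∑ k, P k ^ 2 : ℝ) : ℂ) • 1) := by
    calc (2 : ℂ) • (B * B) = B * B + B * B := two_smul _ _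
      _ = ∑ i, ∑ j, ((P i : ℂ) * P j) • (e i * e j + e j * e i) := by
        nth_rewrite 1 [h1]
        rw [h2]
        simp only [smul_add, Finset.sum_add_distrib]
      _ = ∑ i, ((P i : ℂ) * P i) • (e i * e i + e i * e i) := by
        refine Finset.sum_congr rfl fun i _ => Finset.sum_eq_single i ?_ (by simp)
        intro j _ hj
        rw [hanti i j hj.symm, smul_zero]
      _ = (2 : ℂ) • (-((∑ k, P k ^ 2 : ℝ) : ℂ) • 1) := by
        simp only [hsq, ← two_smul ℂ (-1 : Module.End ℂ V), smul_smul, ← Finset.sum_smul]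
        rw [smul_neg, ← neg_smul]
        congr 1
        push_cast
        rw [← Finset.sum_mul]
        simp only [pow_two]
        ring
  exact smul_right_injective _ (two_ne_zero : (2 : ℂ) ≠ 0) h3

/-- If `T` anticommutes with an involution `c` and `T² = r²`, then `-r` is an eigenvalue of `T`. -/
lemma exists_neg_eigenvector {V : Type*} [AddCommGroup V] [Module ℂ V] [Nontrivial V]
    (c T : Module.End ℂ V) (r : ℂ) (hc : ∀ v, c (c v) = v) (hcT : ∀ v, T (c v) = -c (T v))
    (hT : ∀ v, T (T v) = (r * r) • v) : ∃ φ : V, φ ≠ 0 ∧ T φ = -(r • φ) := by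
  obtain ⟨ψ, hψ⟩ := exists_ne (0 : V)
  by_cases h : T ψ - r • ψ = 0
  · refine ⟨c ψ, fun h0 => hψ ?_, ?_⟩
    · rw [← hc ψ, h0, map_zero]
    · rw [hcT, sub_eq_zero.mp h, map_smul]
  · refine ⟨_, h, ?_⟩
    rw [map_sub, map_smul, hT, smul_sub, smul_smul]
    abel

/-- Lemma 3.2: if `⟨φ₀, E φ₀ + P_k dx⁰·dxᵏ·φ₀⟩ ≥ 0` for all constant spinors `φ₀`, then
`E − |P| ≥ 0`. -/
theorem energy_dominates_momentum_of_nonneg_form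
    (n : ℕ) (hn : 1 ≤ n) (Δ : Type*) [NormedAddCommGroup Δ]
    [InnerProductSpace ℂ Δ] [FiniteDimensional ℂ Δ] [Nontrivial Δ]
    (c : Fin (n + 1) → (Δ →ₗ[ℂ] Δ))
    (hc0 : c 0 ∘ₗ c 0 = LinearMap.id)
    (hci : ∀ i : Fin (n + 1), i ≠ 0 → c i ∘ₗ c i = -LinearMap.id)
    (hanti : ∀ a b : Fin (n + 1), a ≠ b → c a ∘ₗ c b + c b ∘ₗ c a = 0)
    (hsa : ∀ s s' : Δ, ⟪c 0 s, s'⟫_ℂ = ⟪s, c 0 s'⟫_ℂ)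
    (hska : ∀ i : Fin (n + 1), i ≠ 0 → ∀ s s' : Δ, ⟪c i s, s'⟫_ℂ = -⟪s, c i s'⟫_ℂ)
    (E : ℝ) (P : Fin n → ℝ)
    (hpos : ∀ φ : Δ,
      0 ≤ (⟪φ, (E : ℂ) • φ + ∑ k : Fin n, (P k : ℂ) • (c 0 (c k.succ φ))⟫_ℂ).re) :
    E - Real.sqrt (∑ k, P k ^ 2) ≥ 0 := by
  set B : Module.End ℂ Δ := ∑ k : Fin n, (P k : ℂ) • c k.succ with hB
  set r := Real.sqrt (∑ k, P k ^ 2) with hr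
  have hBapp : ∀ v, B v = ∑ k : Fin n, (P k : ℂ) • c k.succ v := fun v => by
    simp [hB, LinearMap.sum_apply]
  have hBB : ∀ v, B (B v) = -(((r : ℂ) * r) • v) := by
    intro v
    have h := sum_clifford_mul_self (fun k : Fin n => c k.succ)
      (fun i => hci _ (Fin.succ_ne_zero i))
      (fun i j hij => hanti _ _ (fun h => hij (Fin.succ_injective _ h))) P
    have hrr : ((∑ k, P k ^ 2 : ℝ) : ℂ) = (r : ℂ) * r := by
      rw [← Complex.ofReal_mul, hr,
        Real.mul_self_sqrt (Finset.sum_nonneg fun k _ => sq_nonneg (P k))]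
    rw [hrr] at h
    exact (LinearMap.congr_fun h v).trans (by simp)
  have h0 : ∀ v, c 0 (c 0 v) = v := fun v => LinearMap.congr_fun hc0 v
  have h0B : ∀ v, B (c 0 v) = -c 0 (B v) := by
    intro v
    rw [hBapp, hBapp, map_sum, ← Finset.sum_neg_distrib]
    refine Finset.sum_congr rfl fun k _ => ?_
    have h := LinearMap.congr_fun (hanti k.succ 0 (Fin.succ_ne_zero k)) v
    rw [map_smul, ← smul_neg]
    congr 1
    exact eq_neg_of_add_eq_zero_left h
  obtain ⟨φ, hφ, hAφ⟩ := exists_neg_eigenvector (c 0) (c 0 ∘ₗ B) r h0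
    (fun v => by simp [h0B]) (fun v => by simp [h0B, h0, hBB])
  have key := hpos φ
  have hsum : ∑ k : Fin n, (P k : ℂ) • c 0 (c k.succ φ) = -((r : ℂ) • φ) := by
    rw [← hAφ, LinearMap.comp_apply, hBapp, map_sum]
    simp only [map_smul]
  rw [hsum, ← sub_eq_add_neg, ← sub_smul, inner_smul_right, inner_self_eq_norm_sq_to_K,
    ← Complex.ofReal_sub] at key
  have key' : 0 ≤ (E - r) * ‖φ‖ ^ 2 := by
    have hcast : ((E - r : ℝ) : ℂ) * ((‖φ‖ : ℂ)) ^ 2 = (((E - r) * ‖φ‖ ^ 2 : ℝ) : ℂ) := by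
      push_cast
      ring
    have h := congrArg Complex.re hcast
    rw [Complex.ofReal_re] at h
    exact h ▸ key
  exact nonneg_of_mul_nonneg_left key' (by positivity)
end

section
/- Suppose T₀₀ ∈ ℝ and T = (T₀₁, …, T₀ₙ) ∈ ℝⁿ satisfy the dominant energy condition T₀₀ ≥ ‖T‖ = (Σ_k T₀k²)^{1/2}. Then the operator ℛ := T₀₀ · id + Σ_{k=1}^{n} T₀k (c₀ ∘ c_k) on Δ is positive semidefinite: for every φ ∈ Δ, the real part of ⟨φ, ℛφ⟩ is nonnegative. -/
open scoped InnerProductSpace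

/-!
Set `X = ∑ T₀ₖ cₖ φ`. Skew-adjointness and the Clifford relations say that the vectors `cₖ φ` are
pairwise orthogonal for the real inner product `Re ⟪·,·⟫` and all have norm `‖φ‖`, so
`‖X‖ = ‖T‖ ‖φ‖`. As `c₀` is a self-adjoint involution, it is an isometry, and Cauchy–Schwarz gives
`Re ⟪φ, c₀ X⟫ ≥ -‖T‖ ‖φ‖²`, which the term `T₀₀ ‖φ‖²` compensates.
-/

/-- Algebraic content of inequality (3.1): the dominant energy condition
`T₀₀ ≥ ‖(T₀₁, …, T₀ₙ)‖` implies that the curvature endomorphism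
`ℛ = T₀₀·id + Σ_k T₀k (c₀ ∘ c_k)` is positive semidefinite. -/
theorem dominant_energy_implies_nonneg_endomorphism
    (n : ℕ) (hn : 1 ≤ n) (Δ : Type*) [NormedAddCommGroup Δ]
    [InnerProductSpace ℂ Δ] [FiniteDimensional ℂ Δ]
    (c : Fin (n + 1) → (Δ →ₗ[ℂ] Δ))
    (hc0 : c 0 ∘ₗ c 0 = LinearMap.id)
    (hci : ∀ i : Fin (n + 1), i ≠ 0 → c i ∘ₗ c i = -LinearMap.id)
    (hanti : ∀ a b : Fin (n + 1), a ≠ b → c a ∘ₗ c b + c b ∘ₗ c a = 0)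
    (hsa : ∀ s s' : Δ, ⟪c 0 s, s'⟫_ℂ = ⟪s, c 0 s'⟫_ℂ)
    (hska : ∀ i : Fin (n + 1), i ≠ 0 → ∀ s s' : Δ, ⟪c i s, s'⟫_ℂ = -⟪s, c i s'⟫_ℂ)
    (T₀₀ : ℝ) (T : Fin n → ℝ)
    (hdec : T₀₀ ≥ Real.sqrt (∑ k, T k ^ 2)) :
    ∀ φ : Δ,
      0 ≤ (⟪φ, (T₀₀ : ℂ) • φ + ∑ k : Fin n, (T k : ℂ) • (c 0 (c k.succ φ))⟫_ℂ).re := by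
  intro φ
  have hdiag : ∀ j : Fin n, (⟪c j.succ φ, c j.succ φ⟫_ℂ).re = ‖φ‖ ^ 2 := by
    intro j
    have h := LinearMap.congr_fun (hci j.succ (Fin.succ_ne_zero j)) φ
    simp only [LinearMap.comp_apply, LinearMap.neg_apply, LinearMap.id_apply] at h
    rw [hska _ (Fin.succ_ne_zero j), h, inner_neg_right, neg_neg]
    exact inner_self_eq_norm_sq (𝕜 := ℂ) φ
  have hoff : ∀ j k : Fin n, j ≠ k → (⟪c j.succ φ, c k.succ φ⟫_ℂ).re = 0 := by
    intro j k hjk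
    have h := LinearMap.congr_fun
      (hanti j.succ k.succ (fun h => hjk (Fin.succ_injective n h))) φ
    simp only [LinearMap.comp_apply, LinearMap.add_apply, LinearMap.zero_apply] at h
    have h1 : ⟪c j.succ φ, c k.succ φ⟫_ℂ + ⟪c k.succ φ, c j.succ φ⟫_ℂ = 0 := by
      rw [hska _ (Fin.succ_ne_zero j), hska _ (Fin.succ_ne_zero k), ← neg_add,
        ← inner_add_right, h, inner_zero_right, neg_zero]
    have h2 := congrArg Complex.re h1
    have h3 : (⟪c k.succ φ, c j.succ φ⟫_ℂ).re = (⟪c j.succ φ, c k.succ φ⟫_ℂ).re :=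
      inner_re_symm (𝕜 := ℂ) _ _
    rw [Complex.add_re, h3, Complex.zero_re] at h2
    linarith
  set X : Δ := ∑ k : Fin n, (T k : ℂ) • c k.succ φ with hX
  have hXnorm : ‖X‖ = Real.sqrt (∑ k, T k ^ 2) * ‖φ‖ := by
    have hsq : ‖X‖ ^ 2 = (∑ k, T k ^ 2) * ‖φ‖ ^ 2 := by
      have h : (⟪X, X⟫_ℂ).re = ‖X‖ ^ 2 := inner_self_eq_norm_sq (𝕜 := ℂ) X
      rw [← h, hX, sum_inner, Complex.re_sum, Finset.sum_mul]
      refine Finset.sum_congr rfl fun j _ => ?_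
      rw [inner_sum, Complex.re_sum, Finset.sum_eq_single j]
      · rw [inner_smul_left, inner_smul_right, Complex.conj_ofReal, Complex.re_ofReal_mul,
          Complex.re_ofReal_mul, hdiag]
        ring
      · intro k _ hkj
        rw [inner_smul_left, inner_smul_right, Complex.conj_ofReal, Complex.re_ofReal_mul,
          Complex.re_ofReal_mul, hoff j k hkj.symm]
        ring
      · simp
    rw [← Real.sqrt_sq (norm_nonneg X), hsq, Real.sqrt_mul (by positivity),
      Real.sqrt_sq (norm_nonneg φ)]
  have hc0norm : ‖c 0 X‖ = ‖X‖ := by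
    have h := LinearMap.congr_fun hc0 X
    simp only [LinearMap.comp_apply, LinearMap.id_apply] at h
    rw [← sq_eq_sq₀ (norm_nonneg _) (norm_nonneg _), ← inner_self_eq_norm_sq (𝕜 := ℂ),
      ← inner_self_eq_norm_sq (𝕜 := ℂ), hsa, h]
  have hsum : ∑ k : Fin n, (T k : ℂ) • c 0 (c k.succ φ) = c 0 X := by
    simp [hX, map_sum]
  have hφ : (⟪φ, φ⟫_ℂ).re = ‖φ‖ ^ 2 := inner_self_eq_norm_sq (𝕜 := ℂ) φ
  rw [hsum, inner_add_right, inner_smul_right, Complex.add_re, Complex.re_ofReal_mul, hφ]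
  have hcs : -(‖φ‖ * ‖c 0 X‖) ≤ (⟪φ, c 0 X⟫_ℂ).re :=
    (abs_le.mp ((Complex.abs_re_le_norm _).trans (norm_inner_le_norm φ (c 0 X)))).1
  rw [hc0norm, hXnorm] at hcs
  nlinarith [mul_le_mul_of_nonneg_right hdec (sq_nonneg ‖φ‖)]
end

section
/- Let Q_n be the negative of the standard Euclidean quadratic form on ℝⁿ and let Q_{n,1} be the Minkowski quadratic form on ℝ^{n+1} given by Q_{n,1}(y₀, y₁, …, yₙ) = y₀² − Σᵢ yᵢ², so that the embedding ι : ℝⁿ → ℝ^{n+1}, x ↦ (0, x), is an isometry of quadratic forms (Q_{n,1} ∘ ι = Q_n). Then the induced algebra homomorphism CliffordAlgebra(Q_n) → CliffordAlgebra(Q_{n,1}) maps the spin group of Q_n into the spin group of Q_{n,1}. -/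
/-!
The map `CliffordAlgebra.map f` sends vectors to vectors, so it preserves everything the spin group
is built from: it carries the generators of the Lipschitz group (the invertible vectors) to
generators, it commutes with `star` (the composite of reversal and grade involution) and hence
preserves unitarity (`CliffordAlgebra.map_star_of_isometry`), and it sends products of pairs of
vectors to such products, so that even elements go to even elements (`CliffordAlgebra.map_mem_even`).
None of this depends on the particular forms, and the lemmas hold for an arbitrary isometry.
-/

section

variable {R M N : Type*} [CommRing R] [AddCommGroup M] [Module R M] [AddCommGroup N] [Module R N]
  {Q : QuadraticForm R M} {Q' : QuadraticForm R N}

/-- Both sides are anti-homomorphisms in `x` that agree on scalars and vectors. -/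
theorem CliffordAlgebra.map_star_of_isometry (f : Q →qᵢ Q') (x : CliffordAlgebra Q) :
    CliffordAlgebra.map f (star x) = star (CliffordAlgebra.map f x) := by
  induction x using CliffordAlgebra.induction with
  | algebraMap r => simp [CliffordAlgebra.star_algebraMap]
  | ι m => simp [CliffordAlgebra.star_ι]
  | mul a b ha hb => simp [ha, hb]
  | add a b ha hb => simp [ha, hb]

theorem CliffordAlgebra.map_mem_even (f : Q →qᵢ Q') {x : CliffordAlgebra Q}
    (hx : x ∈ CliffordAlgebra.even Q) :
    CliffordAlgebra.map f x ∈ CliffordAlgebra.even Q' := by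
  -- The even part is generated as an algebra by products of pairs of vectors.
  refine CliffordAlgebra.even_induction Q
    (motive := fun x _ => CliffordAlgebra.map f x ∈ CliffordAlgebra.even Q')
    (fun r => ?_) (fun x y _ _ h₁ h₂ => ?_) (fun m₁ m₂ x _ h => ?_) x hx
  · simp
  · simpa using add_mem h₁ h₂
  · have hmm : CliffordAlgebra.ι Q' (f m₁) * CliffordAlgebra.ι Q' (f m₂) ∈
        CliffordAlgebra.even Q' := CliffordAlgebra.ι_mul_ι_mem_evenOdd_zero Q' (f m₁) (f m₂)
    simpa using mul_mem hmm h

theorem lipschitzGroup.map_mem (f : Q →qᵢ Q') {x : (CliffordAlgebra Q)ˣ}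
    (hx : x ∈ lipschitzGroup Q) :
    Units.map (CliffordAlgebra.map f : CliffordAlgebra Q →* CliffordAlgebra Q') x ∈
      lipschitzGroup Q' := by
  suffices h : lipschitzGroup Q ≤ (lipschitzGroup Q').comap
      (Units.map (CliffordAlgebra.map f : CliffordAlgebra Q →* CliffordAlgebra Q')) from h hx
  refine (Subgroup.closure_le _).2 ?_
  rintro y ⟨m, hm⟩
  exact Subgroup.subset_closure ⟨f m, by simp [← hm]⟩

theorem spinGroup.map_mem (f : Q →qᵢ Q') {u : CliffordAlgebra Q} (hu : u ∈ spinGroup Q) :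
    CliffordAlgebra.map f u ∈ spinGroup Q' := by
  obtain ⟨⟨⟨x, hx, rfl⟩, hstar⟩, heven⟩ := hu
  refine ⟨⟨⟨_, lipschitzGroup.map_mem f hx, rfl⟩, ?_⟩, CliffordAlgebra.map_mem_even f heven⟩
  rw [SetLike.mem_coe, Unitary.mem_iff] at hstar ⊢
  rw [← CliffordAlgebra.map_star_of_isometry, ← map_mul, ← map_mul, hstar.1, hstar.2, map_one]
  exact ⟨rfl, rfl⟩

end

/-- The homomorphism `α̂ : Spin(n) → Spin(n,1)` of diagram (1.11): the isometric
embedding `ι : x ↦ (0, x)` of `(ℝⁿ, Qₙ)` (the negative Euclidean form) into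
`(ℝⁿ⁺¹, Q_{n,1})` (the Minkowski form `y₀² − Σᵢ yᵢ²`) induces an algebra homomorphism
of Clifford algebras which maps the spin group of `Qₙ` into the spin group of
`Q_{n,1}`. -/
theorem clifford_map_spin_into_spin (n : ℕ)
    (Qn : QuadraticForm ℝ (Fin n → ℝ))
    (hQn : Qn = -QuadraticMap.weightedSumSquares ℝ (fun _ : Fin n => (1 : ℝ)))
    (Qn1 : QuadraticForm ℝ (Fin (n + 1) → ℝ))
    (hQn1 : Qn1 = QuadraticMap.weightedSumSquares ℝ
      (fun i : Fin (n + 1) => if i = 0 then (1 : ℝ) else -1))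
    (f : Qn →qᵢ Qn1) (hf : ∀ x, f x = Fin.cons 0 x) :
    ∀ u ∈ spinGroup Qn, CliffordAlgebra.map f u ∈ spinGroup Qn1 := by
  exact fun u hu => spinGroup.map_mem f hu
end
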